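/- Let b > a > 0 and p ≥ 1. If f is twice differentiable on [0,b], |f''| is integrable on [0,b], and |f''|^p is convex on [0,b], then |(f(a)+f(b))/2 − (1/(b−a))·∫_a^b f(x) dx| ≤ ((b−a)²/2^{2−1/p})·[ ((p+1)|f''(a)|^p + 2|f''(b)|^p)/((p+1)(p+2)(p+3)) ]^{1/p}. -/

import Mathlib

open MeasureTheory Real Set

/-!
Write `L = b - a` and `h x = (b - x) |f'' x|`. Integrating `((x - a) (b - x) f' - (a + b - 2 x) f)'`
over `[a, b]` gives the trapezoid error as `(1 / (2 L)) ∫ (x - a) (b - x) f''`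
(`trapezoid_identity`), so its absolute value is at most `(L / 4) c`, where `c` is the mean of `h`
for the weight `x - a`, whose total mass is `L ^ 2 / 2`. Jensen's inequality (integrated Bernoulli
inequality, `jensen_weight`) bounds `c ^ p` by the weighted mean of `h ^ p`, and by convexity
`(x - a) (h x) ^ p` lies below the chord expression
`(x - a) (b - x) ^ p ((b - x) |f'' a| ^ p + (x - a) |f'' b| ^ p) / L`, whose integral is a
combination of two Beta integrals (`integral_chord`).
-/

/-- The tangent line of `x ↦ x ^ p` at `c` lies below its graph. -/
lemma tangent_le_rpow {p c h : ℝ} (hp : 1 ≤ p) (hc : 0 < c) (hh : 0 ≤ h) :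
    c ^ p + p * (c ^ p / c) * (h - c) ≤ h ^ p := by
  have h1 := one_add_mul_self_le_rpow_one_add (s := h / c - 1) (by
    have : 0 ≤ h / c := by positivity
    linarith) hp
  have h2 : (1 + (h / c - 1)) = h / c := by ring
  rw [h2, div_rpow hh hc.le, le_div_iff₀ (by positivity)] at h1
  calc _ = (1 + p * (h / c - 1)) * c ^ p := by field_simp
    _ ≤ _ := h1

/-- The error of the trapezoid rule as a weighted integral of the second derivative. -/
lemma trapezoid_identity {a b : ℝ} {f g k : ℝ → ℝ} (hab : a < b)
    (hf : ContinuousOn f (Icc a b)) (hg : ContinuousOn g (Icc a b))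
    (hf' : ∀ x ∈ Ioo a b, HasDerivAt f (g x) x) (hg' : ∀ x ∈ Ioo a b, HasDerivAt g (k x) x)
    (hk : IntervalIntegrable k volume a b) :
    (f a + f b) / 2 - (1 / (b - a)) * ∫ x in a..b, f x
      = (1 / (2 * (b - a))) * ∫ x in a..b, (x - a) * (b - x) * k x := by
  have hfi : IntervalIntegrable f volume a b :=
    ContinuousOn.intervalIntegrable (by rwa [uIcc_of_le hab.le])
  have hki : IntervalIntegrable (fun x => (x - a) * (b - x) * k x) volume a b :=
    hk.continuousOn_mul (by fun_prop)
  have key := intervalIntegral.integral_eq_sub_of_hasDerivAt_of_le hab.le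
    (f := fun x => (x - a) * (b - x) * g x - (a + b - 2 * x) * f x)
    (f' := fun x => (x - a) * (b - x) * k x + 2 * f x)
    (by fun_prop)
    (by
      intro x hx
      have hid := hasDerivAt_id x
      have := ((((hid.sub_const a).mul (hid.const_sub b)).mul (hg' x hx)).sub
        (((hid.const_mul 2).const_sub (a + b)).mul (hf' x hx)))
      refine this.congr_deriv ?_
      simp only [id, Pi.mul_apply]
      ring)
    (hki.add (hfi.const_mul 2))
  rw [intervalIntegral.integral_add hki (hfi.const_mul 2),
    intervalIntegral.integral_const_mul] at key
  have hL : b - a ≠ 0 := by linarith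
  have e : ∫ x in a..b, (x - a) * (b - x) * k x
      = (b - a) * (f a + f b) - 2 * ∫ x in a..b, f x := by linear_combination key
  rw [e]
  field_simp

lemma integral_weight (a b : ℝ) : ∫ x in a..b, (x - a) = (b - a) ^ 2 / 2 := by
  rw [intervalIntegral.integral_comp_sub_right (fun x => x) a, integral_id]
  ring

/-- Jensen's inequality for `h ↦ h ^ p` and the weight `x - a` on `[a, b]`, stated for the mean `c`
and any integrable majorant `m` of `(x - a) (h x) ^ p`, so that integrability of the latter is
not needed. -/
lemma jensen_weight {a b p c : ℝ} {h m : ℝ → ℝ} (hab : a < b) (hp : 1 ≤ p) (hc : 0 < c)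
    (hh : ∀ x ∈ Icc a b, 0 ≤ h x) (hi : IntervalIntegrable h volume a b)
    (hm : IntervalIntegrable m volume a b)
    (hle : ∀ x ∈ Icc a b, (x - a) * h x ^ p ≤ m x)
    (hmean : ∫ x in a..b, (x - a) * h x = c * ((b - a) ^ 2 / 2)) :
    c ^ p * ((b - a) ^ 2 / 2) ≤ ∫ x in a..b, m x := by
  have hw : IntervalIntegrable (fun x => x - a) volume a b :=
    Continuous.intervalIntegrable (by fun_prop) _ _
  have hwh : IntervalIntegrable (fun x => (x - a) * h x) volume a b :=
    hi.continuousOn_mul (by fun_prop)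
  set d := p * (c ^ p / c)
  have hmono : ∫ x in a..b, ((c ^ p - d * c) * (x - a) + d * ((x - a) * h x))
      ≤ ∫ x in a..b, m x := by
    refine intervalIntegral.integral_mono_on hab.le
      ((hw.const_mul _).add (hwh.const_mul _)) hm fun x hx => ?_
    refine le_trans ?_ (hle x hx)
    have := mul_le_mul_of_nonneg_left (tangent_le_rpow hp hc (hh x hx)) (sub_nonneg.2 hx.1)
    calc _ = (x - a) * (c ^ p + d * (h x - c)) := by ring
      _ ≤ _ := this
  rw [intervalIntegral.integral_add (hw.const_mul _) (hwh.const_mul _),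
    intervalIntegral.integral_const_mul, intervalIntegral.integral_const_mul,
    integral_weight, hmean] at hmono
  linarith

lemma integral_chord {a b p : ℝ} (A B : ℝ) (hab : a < b) (hp : 1 ≤ p) :
    ∫ x in a..b, (x - a) * (b - x) ^ p * (((b - x) * A + (x - a) * B) / (b - a))
      = (b - a) ^ p * (b - a) ^ 2 *
        (((p + 1) * A + 2 * B) / ((p + 1) * (p + 2) * (p + 3))) := by
  have hL : 0 < b - a := sub_pos.2 hab
  set L := b - a with hLdef
  have h1 : ∫ x in a..b, (x - a) * (b - x) ^ p * (((b - x) * A + (x - a) * B) / L)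
      = ∫ y in (0:ℝ)..L, (L - y) * y ^ p * ((y * A + (L - y) * B) / L) := by
    have := intervalIntegral.integral_comp_sub_left (a := a) (b := b)
      (fun y => (L - y) * y ^ p * ((y * A + (L - y) * B) / L)) b
    rw [sub_self] at this
    rw [← hLdef] at this
    rw [← this]
    refine intervalIntegral.integral_congr fun x _ => ?_
    have : L - (b - x) = x - a := by rw [hLdef]; ring
    simp only [this]
  have h2 : ∫ y in (0:ℝ)..L, (L - y) * y ^ p * ((y * A + (L - y) * B) / L)
      = ∫ y in (0:ℝ)..L, (L * B * y ^ p + (A - 2 * B) * y ^ (p + 1)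
          + ((B - A) / L) * y ^ (p + 2)) := by
    refine intervalIntegral.integral_congr fun y hy => ?_
    rw [uIcc_of_le hL.le] at hy
    have e1 : y ^ (p + 1) = y ^ p * y := by
      rw [rpow_add_of_nonneg hy.1 (by linarith) (by norm_num), rpow_one]
    have e2 : y ^ (p + 2) = y ^ p * y ^ 2 := by
      rw [rpow_add_of_nonneg hy.1 (by linarith) (by norm_num), rpow_two]
    simp only [e1, e2]
    field_simp
    ring
  have i (r : ℝ) (hr : 0 ≤ r) : IntervalIntegrable (fun y : ℝ => y ^ r) volume 0 L :=
    intervalIntegral.intervalIntegrable_rpow (Or.inl hr)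
  have i0 := i p (by linarith)
  have i1 := i (p + 1) (by linarith)
  have i2 := i (p + 2) (by linarith)
  rw [h1, h2, intervalIntegral.integral_add ((i0.const_mul _).add (i1.const_mul _))
      (i2.const_mul _), intervalIntegral.integral_add (i0.const_mul _) (i1.const_mul _),
    intervalIntegral.integral_const_mul, intervalIntegral.integral_const_mul,
    intervalIntegral.integral_const_mul, integral_rpow (Or.inl (by linarith)),
    integral_rpow (Or.inl (by linarith)), integral_rpow (Or.inl (by linarith)),
    zero_rpow (by linarith), zero_rpow (by linarith), zero_rpow (by linarith)]
  have e1 : L ^ (p + 1) = L ^ p * L := by rw [rpow_add hL, rpow_one]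
  have e2 : L ^ (p + 1 + 1) = L ^ p * L ^ 2 := by
    rw [rpow_add hL, rpow_add hL, rpow_one]; ring
  have e3 : L ^ (p + 2 + 1) = L ^ p * L ^ 3 := by
    rw [rpow_add hL, rpow_add hL, rpow_one, rpow_two]; ring
  rw [e1, e2, e3]
  have : p + 1 ≠ 0 := by linarith
  have : p + 2 ≠ 0 := by linarith
  have : p + 3 ≠ 0 := by linarith
  have : p + 1 + 1 ≠ 0 := by linarith
  have : p + 2 + 1 ≠ 0 := by linarith
  field_simp
  ring

/-- Corollary of Theorem 3.3 with m = α = 1 and n = 2. -/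
theorem cor33_convex (a b p : ℝ) (f : ℝ → ℝ)
    (ha : 0 < a) (hab : a < b) (hp : 1 ≤ p)
    (hdiff : ∀ k < 2, DifferentiableOn ℝ (iteratedDerivWithin k f (Set.Icc 0 b)) (Set.Icc 0 b))
    (hint : IntegrableOn (fun x => |iteratedDerivWithin 2 f (Set.Icc 0 b) x|) (Set.Icc 0 b))
    (hconv : ConvexOn ℝ (Set.Icc (0:ℝ) b)
      (fun x => |iteratedDerivWithin 2 f (Set.Icc 0 b) x| ^ p)) :
    |(f a + f b) / 2 - (1 / (b - a)) * ∫ x in a..b, f x|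
    ≤ ((b - a) ^ 2 / (2:ℝ) ^ (2 - 1 / p))
        * ( ((p + 1) * |iteratedDerivWithin 2 f (Set.Icc 0 b) a| ^ p
              + 2 * |iteratedDerivWithin 2 f (Set.Icc 0 b) b| ^ p)
            / ((p + 1) * (p + 2) * (p + 3)) ) ^ (1 / p) := by
  have hd0 := hdiff 0 (by norm_num)
  have hd1 := hdiff 1 (by norm_num)
  rw [iteratedDerivWithin_zero] at hd0
  have hg' : ∀ x ∈ Ioo 0 b, HasDerivAt (iteratedDerivWithin 1 f (Icc 0 b))
      (iteratedDerivWithin 2 f (Icc 0 b) x) x := fun x hx => by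
    rw [iteratedDerivWithin_succ (n := 1)]
    exact (hd1 x (Ioo_subset_Icc_self hx)).hasDerivWithinAt.hasDerivAt (Icc_mem_nhds hx.1 hx.2)
  have hf' : ∀ x ∈ Ioo 0 b, HasDerivAt f (iteratedDerivWithin 1 f (Icc 0 b) x) x :=
      fun x hx => by
    rw [iteratedDerivWithin_one]
    exact (hd0 x (Ioo_subset_Icc_self hx)).hasDerivWithinAt.hasDerivAt (Icc_mem_nhds hx.1 hx.2)
  set g := iteratedDerivWithin 1 f (Icc 0 b)
  set k := iteratedDerivWithin 2 f (Icc 0 b)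
  have hsub : Icc a b ⊆ Icc 0 b := Icc_subset_Icc_left ha.le
  have hsub' : Ioo a b ⊆ Ioo 0 b := Ioo_subset_Ioo_left ha.le
  -- Only `|f''|` is assumed integrable; measurability of `f''` comes from its being a derivative.
  have hki : IntervalIntegrable k volume a b := by
    rw [intervalIntegrable_iff_integrableOn_Ioo_of_le hab.le]
    have hm : AEStronglyMeasurable k (volume.restrict (Ioo a b)) := by
      refine (aestronglyMeasurable_deriv g _).congr ?_
      filter_upwards [ae_restrict_mem measurableSet_Ioo] with x hx
      exact (hg' x (hsub' hx)).deriv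
    exact (integrable_norm_iff hm).1 (hint.mono_set (Ioo_subset_Icc_self.trans hsub))
  rw [trapezoid_identity hab (hd0.continuousOn.mono hsub) (hd1.continuousOn.mono hsub)
    (fun x hx => hf' x (hsub' hx)) (fun x hx => hg' x (hsub' hx)) hki]
  have hL : 0 < b - a := sub_pos.2 hab
  have hp0 : 0 < p := by linarith
  set K := ((p + 1) * |k a| ^ p + 2 * |k b| ^ p) / ((p + 1) * (p + 2) * (p + 3)) with hK
  have hK0 : 0 ≤ K := by positivity
  set I := ∫ x in a..b, (x - a) * ((b - x) * |k x|) with hI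
  have hbound : |∫ x in a..b, (x - a) * (b - x) * k x| ≤ I := by
    refine (intervalIntegral.abs_integral_le_integral_abs hab.le).trans_eq ?_
    refine intervalIntegral.integral_congr fun x hx => ?_
    rw [uIcc_of_le hab.le] at hx
    simp only [abs_mul, abs_of_nonneg (sub_nonneg.2 hx.1), abs_of_nonneg (sub_nonneg.2 hx.2)]
    ring
  set c := I / ((b - a) ^ 2 / 2) with hc
  have hIc : I = c * ((b - a) ^ 2 / 2) := by rw [hc]; field_simp
  have hcle : c ≤ 2 ^ (1 / p) * (b - a) * K ^ (1 / p) := by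
    rcases le_or_gt c 0 with h0 | h0
    · exact h0.trans (by positivity)
    have hj := jensen_weight (h := fun x => (b - x) * |k x|)
      (m := fun x => (x - a) * (b - x) ^ p *
        (((b - x) * |k a| ^ p + (x - a) * |k b| ^ p) / (b - a))) hab hp h0
      (fun x hx => mul_nonneg (sub_nonneg.2 hx.2) (abs_nonneg _))
      (hki.abs.continuousOn_mul (by fun_prop))
      (Continuous.intervalIntegrable (by
        have : Continuous fun x : ℝ => (b - x) ^ p :=
          (continuous_const.sub continuous_id).rpow_const fun _ => Or.inr hp0.le
        fun_prop) _ _)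
      (fun x hx => by
        have hxa := sub_nonneg.2 hx.1
        have hxb := sub_nonneg.2 hx.2
        have hcx := hconv.2 (hsub (left_mem_Icc.2 hab.le)) (hsub (right_mem_Icc.2 hab.le))
          (div_nonneg hxb hL.le) (div_nonneg hxa hL.le) (by field_simp; ring)
        have hx' : ((b - x) / (b - a)) • a + ((x - a) / (b - a)) • b = x := by
          simp only [smul_eq_mul]; field_simp; ring
        rw [hx'] at hcx
        simp only [smul_eq_mul] at hcx
        rw [mul_rpow hxb (abs_nonneg _), ← mul_assoc]
        refine mul_le_mul_of_nonneg_left (hcx.trans_eq (by ring)) (by positivity))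
      hIc
    rw [integral_chord _ _ hab hp, ← hK] at hj
    have hcp : c ^ p ≤ 2 * (b - a) ^ p * K := by
      have : 0 < (b - a) ^ 2 := by positivity
      refine le_of_mul_le_mul_right ?_ this
      linarith
    have h3 := rpow_le_rpow (by positivity) hcp (by positivity : 0 ≤ 1 / p)
    rwa [mul_rpow (by positivity) hK0, mul_rpow (by norm_num) (by positivity),
      ← rpow_mul h0.le, ← rpow_mul hL.le, mul_one_div_cancel hp0.ne', rpow_one, rpow_one] at h3
  have h2 : (2:ℝ) ^ (2 - 1 / p) = 4 / 2 ^ (1 / p) := by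
    rw [rpow_sub (by norm_num), rpow_two]; norm_num
  rw [abs_mul, abs_of_pos (by positivity : 0 < 1 / (2 * (b - a))), h2]
  calc _ ≤ 1 / (2 * (b - a)) * (c * ((b - a) ^ 2 / 2)) := by
        rw [← hIc]; gcongr
    _ = (b - a) / 4 * c := by field_simp; ring
    _ ≤ (b - a) / 4 * (2 ^ (1 / p) * (b - a) * K ^ (1 / p)) := by gcongr
    _ = _ := by field_simp
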